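/- arXiv:2107.08444 — 2 statements merged into one kernel-verified Lean document; each statement's English description precedes it below -/
import Mathlib

section
/- Any partial concept class H on a set X with LD(H) = d < ∞ admits a sample compression scheme of size d: there exist functions κ and ρ such that for every finite sequence S ∈ (X × {0,1})* realizable with respect to H, κ(S) is a subsequence of S of length at most d, ρ maps finite sequences in (X × {0,1})* to total functions X → {0,1}, and the function ρ(κ(S)) is correct on all of S, i.e. ρ(κ(S))(xᵢ) = yᵢ for every example (xᵢ,yᵢ) appearing in S. -/
/-!
The proof runs the Standard Optimal Algorithm on subclasses of `H` cut out by finitely many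
examples. For a set `T` of labeled examples let `restrictTo H T` be the concepts of `H` that agree
with `T`. If a class `V` is nonempty with Littlestone dimension `k`, then for every point `x` at
most one label `b` leaves a subclass `{h ∈ V | h x = b}` of dimension `≥ k`
(`ldGe_succ_of_restrictTo`). Predicting the label `true` exactly when its subclass has dimension
`≥ k` therefore has the property that every mistake lowers the dimension of the subclass
consistent with the correct label (`not_ldGe_of_soaPredict_ne`).

Given a realizable sample `S`, choose a set `T` of examples of `S` of least dimension of
`restrictTo H T` among those with `|T| + dim (restrictTo H T) ≤ d`. The predictor attached to `T`
is correct on `S`, because adding an example on which it errs would lower the dimension while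
enlarging `T` by at most one. As `restrictTo H T` contains the concept realizing `S`, its
dimension is at least `0`, so `|T| ≤ d`. Finally, `restrictTo H T` depends only on the set `T`, so
the order in which the examples are added is irrelevant and `T` may be listed in the order in
which it occurs in `S`.
-/

/-- A partial concept class realizes a labeled sample (a sequence is realizable w.r.t. `H`). -/
def RealizableSeq {X : Type*} (H : Set (X → Option Bool)) (S : List (X × Bool)) : Prop :=
  ∃ h ∈ H, ∀ p ∈ S, h p.1 = some p.2

/-- `LD(H) ≥ d`: there is a complete binary mistake tree of depth `d`, given by the map `t`
from finite bit-strings (the path so far) to points of `X`, all of whose branches are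
realizable w.r.t. `H`. -/
def LDGe {X : Type*} (H : Set (X → Option Bool)) (d : ℕ) : Prop :=
  ∃ t : List Bool → X, ∀ y : Fin d → Bool,
    RealizableSeq H (List.ofFn fun i : Fin d => (t ((List.ofFn y).take i), y i))

/-- `LD(H) = d`. -/
def LDEq {X : Type*} (H : Set (X → Option Bool)) (d : ℕ) : Prop :=
  LDGe H d ∧ ¬ LDGe H (d + 1)

/-- The concepts of `H` that agree with every labeled example in `T`. -/
def restrictTo {X : Type*} (H : Set (X → Option Bool)) (T : Set (X × Bool)) :
    Set (X → Option Bool) :=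
  {h | h ∈ H ∧ ∀ p ∈ T, h p.1 = some p.2}

/-- The Littlestone dimension shifted by one, as the least `n` with `¬ LDGe V n`: it is `0` for the
empty class. If `LDGe V n` holds for every `n`, the value is the junk value `0`. -/
noncomputable def ldSucc {X : Type*} (V : Set (X → Option Bool)) : ℕ :=
  sInf {n | ¬ LDGe V n}

open Classical in
/-- The prediction at `x` of the Standard Optimal Algorithm for the class `restrictTo H T`: the
label `true` iff requiring it at `x` does not lower the Littlestone dimension. -/
noncomputable def soaPredict {X : Type*} (H : Set (X → Option Bool)) (T : Set (X × Bool))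
    (x : X) : Bool :=
  decide (LDGe (restrictTo H (insert (x, true) T)) (ldSucc (restrictTo H T) - 1))

theorem LDGe.mono {X : Type*} {V W : Set (X → Option Bool)} (hVW : V ⊆ W) {n : ℕ}
    (hV : LDGe V n) : LDGe W n := by
  obtain ⟨t, ht⟩ := hV
  refine ⟨t, fun y => ?_⟩
  obtain ⟨h, hh, hr⟩ := ht y
  exact ⟨h, hVW hh, hr⟩

/-- Two mistake trees of depth `k`, one for each label at `x`, are joined below a root `x`. -/
theorem ldGe_succ_of_restrictTo {X : Type*} {H : Set (X → Option Bool)} {T : Set (X × Bool)}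
    {x : X} {k : ℕ} (hb : ∀ b, LDGe (restrictTo H (insert (x, b) T)) k) :
    LDGe (restrictTo H T) (k + 1) := by
  choose t ht using hb
  refine ⟨fun l => match l with
    | [] => x
    | b :: l => t b l, fun y => ?_⟩
  obtain ⟨h, ⟨hH, hT⟩, hr⟩ := ht (y 0) (fun i => y i.succ)
  refine ⟨h, ⟨hH, fun p hp => hT p (Set.mem_insert_of_mem _ hp)⟩, ?_⟩
  simp only [List.forall_mem_ofFn_iff] at hr ⊢
  intro i
  induction i using Fin.cases with
  | zero => simpa using hT _ (Set.mem_insert _ _)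
  | succ i => simpa [List.ofFn_succ] using hr i

/-- A mistake of the Standard Optimal Algorithm lowers the Littlestone dimension. -/
theorem not_ldGe_of_soaPredict_ne {X : Type*} {H : Set (X → Option Bool)} {T : Set (X × Bool)}
    {x : X} {b : Bool} {k : ℕ} (hk : ldSucc (restrictTo H T) = k + 1)
    (hn : ¬ LDGe (restrictTo H T) (k + 1)) (hne : soaPredict H T x ≠ b) :
    ¬ LDGe (restrictTo H (insert (x, b) T)) k := by
  intro hb
  cases b with
  | true => simp [soaPredict, hk, hb] at hne
  | false =>
    have ht : LDGe (restrictTo H (insert (x, true) T)) k := by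
      simpa [soaPredict, hk] using hne
    exact hn (ldGe_succ_of_restrictTo (x := x) (by rintro (_ | _) <;> assumption))

theorem exists_sublist_soaPredict {X : Type*} {H : Set (X → Option Bool)} {d : ℕ}
    (hLD : LDEq H d) {S : List (X × Bool)} (hS : RealizableSeq H S) :
    ∃ L : List (X × Bool), L.Sublist S ∧ L.length ≤ d ∧
      ∀ p ∈ S, soaPredict H {q | q ∈ L} p.1 = p.2 := by
  classical
  obtain ⟨h, hH, hhS⟩ := hS
  have hsub (T : Set (X × Bool)) : restrictTo H T ⊆ H := fun _ hh => hh.1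
  -- Finiteness of `LD(H)` makes the infimum in `ldSucc` an attained one.
  have hspec (T : Set (X × Bool)) : ¬ LDGe (restrictTo H T) (ldSucc (restrictTo H T)) :=
    Nat.sInf_mem (s := {n | ¬ LDGe (restrictTo H T) n})
      ⟨d + 1, fun hT => hLD.2 (hT.mono (hsub T))⟩
  let good : Set (Finset (X × Bool)) :=
    {T | (∀ p ∈ T, p ∈ S) ∧ T.card + ldSucc (restrictTo H (T : Set (X × Bool))) ≤ d + 1}
  have hgood : good.Nonempty := by
    refine ⟨∅, by simp, ?_⟩
    have : ldSucc (restrictTo H ((∅ : Finset (X × Bool)) : Set (X × Bool))) ≤ d + 1 :=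
      Nat.sInf_le fun hT => hLD.2 (hT.mono (hsub _))
    simpa using this
  obtain ⟨T, ⟨hTS, hTd⟩, hmin⟩ :=
    exists_minimalFor_of_wellFoundedLT (· ∈ good)
      (fun T => ldSucc (restrictTo H (T : Set (X × Bool)))) hgood
  have hpos : ldSucc (restrictTo H (T : Set (X × Bool))) ≠ 0 := by
    intro h0
    have := hspec (T : Set (X × Bool))
    rw [h0] at this
    obtain ⟨t, -⟩ := hLD.1
    exact this ⟨t, fun y => ⟨h, ⟨hH, fun p hp => hhS p (hTS p hp)⟩, by simp⟩⟩
  obtain ⟨k, hk⟩ := Nat.exists_eq_add_one_of_ne_zero hpos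
  have hn : ¬ LDGe (restrictTo H (T : Set (X × Bool))) (k + 1) := by
    have := hspec (T : Set (X × Bool))
    rwa [hk] at this
  -- Repeated examples of `S` are discarded so that the length is at most `T.card`.
  refine ⟨S.dedup.filter (· ∈ T), List.filter_sublist.trans (List.dedup_sublist S), ?_, ?_⟩
  · have hnd : (S.dedup.filter (· ∈ T)).Nodup := (List.nodup_dedup S).filter _
    have hcard : (S.dedup.filter (· ∈ T)).toFinset.card ≤ T.card :=
      Finset.card_le_card fun p hp => by simpa using (List.mem_filter.1 (List.mem_toFinset.1 hp)).2
    rw [List.toFinset_card_of_nodup hnd] at hcard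
    omega
  · have hL : {q | q ∈ S.dedup.filter (· ∈ T)} = (T : Set (X × Bool)) := by
      ext q
      simpa using hTS q
    rw [hL]
    rintro ⟨x, b⟩ hp
    by_contra hne
    have hdrop : ldSucc (restrictTo H ((insert (x, b) T : Finset (X × Bool)) : Set (X × Bool)))
        ≤ k := by
      rw [Finset.coe_insert]
      exact Nat.sInf_le (not_ldGe_of_soaPredict_ne hk hn hne)
    have hc := Finset.card_insert_le (x, b) T
    have hle := hmin (j := insert (x, b) T)
      ⟨Finset.forall_mem_insert _ _ _ |>.2 ⟨hp, hTS⟩, by omega⟩ (by simp only; omega)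
    simp only at hle
    omega

/-- a partial concept class with `LD(H) = d < ∞` admits a sample
compression scheme of size `d`: the compressor `κ` selects a subsequence of the input of
length at most `d`, and the reconstructor `ρ` recovers a total function correct on the
whole realizable input sample. -/
theorem compression_scheme_of_finite_littlestone {X : Type*}
    (H : Set (X → Option Bool)) (d : ℕ) (hLD : LDEq H d) :
    ∃ (κ : List (X × Bool) → List (X × Bool)) (ρ : List (X × Bool) → X → Bool),
      ∀ S : List (X × Bool), RealizableSeq H S →
        (κ S).Sublist S ∧ (κ S).length ≤ d ∧ ∀ p ∈ S, ρ (κ S) p.1 = p.2 := by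
  choose! κ hκ using fun (S : List (X × Bool)) (hS : RealizableSeq H S) =>
    exists_sublist_soaPredict hLD hS
  exact ⟨κ, fun L => soaPredict H {q | q ∈ L}, hκ⟩
end

section
/- Let X = ℕ = {1,2,…} and let H be a partial concept class on X with VC(H) = d < ∞. Then there exists a total concept class H̄ ⊆ {0,1}^ℕ that strongly disambiguates H (every h ∈ H has an extension h̄ ∈ H̄ agreeing with h on supp(h)) such that for every m ∈ ℕ, the set of restrictions {h̄|_{{1,…,m}} : h̄ ∈ H̄} has size at most (m+1)^{(d+1)·log₂(m) + 2}. -/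
/-!
The disambiguation is produced by an online algorithm that reads the coordinates `0, 1, 2, …` in
order and keeps a version space `V`, initially `H`. At coordinate `x` it predicts the bit `b` for
which `{h ∈ V | h x = some b}` has the larger potential. On a concept `h` it outputs its own
prediction unless `h x` is the opposite bit; in that case (a *mistake*) it outputs `h x` and
restricts `V` to the concepts having that value at `x`. The output extends `h`, and its first `m`
bits depend only on the set of mistakes made below `m`.

The potential at time `x` is `Φ_x(V) = ∑ (max(x, max U) + 1)^{-(d+1)}`, the sum being over all
finite sets `U` shattered by `V`. Three facts make it work.

* If `U` is shattered by both `{h ∈ V | h x = some 0}` and `{h ∈ V | h x = some 1}`, then `V`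
  shatters both `U` and `U ∪ {x}`, and these have the same weight at time `x`. Hence the potentials
  of the two restrictions add up to at most `Φ_x(V)`, and each mistake at least halves the potential
  (`potential_add_le`, `two_mul_potential_le`). Moreover `Φ_x` is antitone in `x`.
* Initially `Φ_0(H) ≤ 3`, because for `d ≥ 1` at most `(n+1)^{d-1}` sets of size at most `d` have
  maximum `n` (for `d = 0` only `∅` is counted), so that the sum is dominated by `2 + ∑_{n ≥ 1} (n+1)^{-2}` (`potential_zero_le`).
* A nonempty `V` shatters `∅`, so `Φ_{m-1}(V) ≥ m^{-(d+1)}`.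

Therefore at most `(d+1) log₂ m + 2` mistakes occur below `m`, and there are at most `(m+1)^L`
subsets of `{0, …, m-1}` of size at most `L`.
-/

/-- A finite set `U` is shattered by the partial concept class `H`. -/
def Shatters {X : Type*} (H : Set (X → Option Bool)) (U : Finset X) : Prop :=
  ∀ f : X → Bool, ∃ h ∈ H, ∀ x ∈ U, h x = some (f x)

/-- `VC(H) = d`: some shattered set has size `d` and every shattered set has size at most `d`. -/
def VCDimEq {X : Type*} (H : Set (X → Option Bool)) (d : ℕ) : Prop :=
  (∃ U : Finset X, Shatters H U ∧ U.card = d) ∧ ∀ U : Finset X, Shatters H U → U.card ≤ d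

section

open Finset hiding Shatters
open scoped ENNReal Classical

/-- The concepts of `V` that take the value `b` at `x`. -/
def restrictAt (V : Set (ℕ → Option Bool)) (x : ℕ) (b : Bool) : Set (ℕ → Option Bool) :=
  {h | h ∈ V ∧ h x = some b}

/-- The weight `(max(x, max U) + 1)^{-(d+1)}` of a finite set `U` at time `x`, where the maximum of
the empty set is `0`. -/
noncomputable def weight (d x : ℕ) (U : Finset ℕ) : ℝ :=
  (((max x (U.sup id) : ℕ) : ℝ) + 1)⁻¹ ^ (d + 1)

/-- The total weight at time `x` of the finite sets shattered by `V`. It takes values in `ℝ≥0∞`, so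
that no summability has to be assumed. -/
noncomputable def potential (d x : ℕ) (V : Set (ℕ → Option Bool)) : ℝ≥0∞ :=
  ∑' U : {U : Finset ℕ // Shatters V U}, ENNReal.ofReal (weight d x U)

/-- The bit whose restriction of `V` at `x` has the larger potential. -/
noncomputable def prediction (d x : ℕ) (V : Set (ℕ → Option Bool)) : Bool :=
  decide (potential d x (restrictAt V x false) ≤ potential d x (restrictAt V x true))

/-- The version space before coordinate `n` is read, when `err x V` tells whether the prediction
made at `x` from version space `V` is declared a mistake. -/
noncomputable def versionSpace (d : ℕ) (H : Set (ℕ → Option Bool))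
    (err : ℕ → Set (ℕ → Option Bool) → Prop) : ℕ → Set (ℕ → Option Bool)
  | 0 => H
  | n + 1 =>
    if err n (versionSpace d H err n) then
      restrictAt (versionSpace d H err n) n (!prediction d n (versionSpace d H err n))
    else versionSpace d H err n

/-- The total concept output by the algorithm: the prediction, flipped at every mistake. -/
noncomputable def output (d : ℕ) (H : Set (ℕ → Option Bool))
    (err : ℕ → Set (ℕ → Option Bool) → Prop) (n : ℕ) : Bool :=
  if err n (versionSpace d H err n) then !prediction d n (versionSpace d H err n)
  else prediction d n (versionSpace d H err n)

/-- The mistakes made when the true labels are those of `h`; undefined labels never count. -/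
def errOf (d : ℕ) (h : ℕ → Option Bool) (n : ℕ) (V : Set (ℕ → Option Bool)) : Prop :=
  h n = some (!prediction d n V)

/-- The coordinates below `m` at which a mistake is made. -/
noncomputable def mistakes (d : ℕ) (H : Set (ℕ → Option Bool))
    (err : ℕ → Set (ℕ → Option Bool) → Prop) (m : ℕ) : Finset ℕ :=
  {n ∈ range m | err n (versionSpace d H err n)}

/-! ### The potential -/

lemma weight_nonneg (d x : ℕ) (U : Finset ℕ) : 0 ≤ weight d x U := by
  unfold weight; positivity

lemma weight_insert (d x : ℕ) (U : Finset ℕ) : weight d x (insert x U) = weight d x U := by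
  unfold weight
  simp [Finset.sup_insert]

lemma weight_anti (d : ℕ) {x y : ℕ} (hxy : x ≤ y) (U : Finset ℕ) :
    weight d y U ≤ weight d x U := by
  unfold weight
  gcongr

lemma potential_anti (d : ℕ) {x y : ℕ} (hxy : x ≤ y) (V : Set (ℕ → Option Bool)) :
    potential d y V ≤ potential d x V :=
  ENNReal.tsum_le_tsum fun U => ENNReal.ofReal_le_ofReal (weight_anti d hxy U)

lemma Shatters.notMem {V : Set (ℕ → Option Bool)} {x : ℕ} {b : Bool} {U : Finset ℕ}
    (hU : Shatters (restrictAt V x b) U) : x ∉ U := by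
  intro hx
  obtain ⟨h, hh, hf⟩ := hU fun _ => !b
  have := hf x hx
  rw [hh.2] at this
  cases b <;> simp at this

lemma Shatters.of_restrictAt {V : Set (ℕ → Option Bool)} {x : ℕ} {b : Bool} {U : Finset ℕ}
    (hU : Shatters (restrictAt V x b) U) : Shatters V U := fun f =>
  let ⟨h, hh, hf⟩ := hU f
  ⟨h, hh.1, hf⟩

lemma Shatters.insert {V : Set (ℕ → Option Bool)} {x : ℕ} {U : Finset ℕ}
    (h0 : Shatters (restrictAt V x false) U) (h1 : Shatters (restrictAt V x true) U) :
    Shatters V (insert x U) := by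
  intro f
  have key : ∀ b, Shatters (restrictAt V x b) U := by rintro (_ | _) <;> assumption
  obtain ⟨h, hh, hf⟩ := key (f x) f
  refine ⟨h, hh.1, fun y hy => ?_⟩
  rcases Finset.mem_insert.1 hy with rfl | hy
  · exact hh.2
  · exact hf y hy

lemma potential_add_le (d x : ℕ) (V : Set (ℕ → Option Bool)) :
    potential d x (restrictAt V x false) + potential d x (restrictAt V x true)
      ≤ potential d x V := by
  -- A set shattered by both restrictions is counted once as itself and once with `x` added.
  let φ : {U : Finset ℕ // Shatters (restrictAt V x false) U} ⊕
      {U : Finset ℕ // Shatters (restrictAt V x true) U} → {U : Finset ℕ // Shatters V U} :=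
    Sum.elim (fun U => ⟨U.1, U.2.of_restrictAt⟩)
      (fun U => if h : Shatters (restrictAt V x false) U.1 then ⟨insert x U.1, h.insert U.2⟩
        else ⟨U.1, U.2.of_restrictAt⟩)
  have hφ : Function.Injective φ := by
    rintro (⟨U, hU⟩ | ⟨U, hU⟩) (⟨W, hW⟩ | ⟨W, hW⟩) h
    · simpa [φ] using h
    · exfalso
      by_cases hc : Shatters (restrictAt V x false) W
      · simp only [φ, Sum.elim_inl, Sum.elim_inr, hc, dif_pos, Subtype.mk.injEq] at h
        exact hU.notMem (h ▸ Finset.mem_insert_self x W)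
      · simp only [φ, Sum.elim_inl, Sum.elim_inr, hc, dif_neg, Subtype.mk.injEq,
          not_false_eq_true] at h
        exact hc (h ▸ hU)
    · exfalso
      by_cases hc : Shatters (restrictAt V x false) U
      · simp only [φ, Sum.elim_inl, Sum.elim_inr, hc, dif_pos, Subtype.mk.injEq] at h
        exact hW.notMem (h ▸ Finset.mem_insert_self x U)
      · simp only [φ, Sum.elim_inl, Sum.elim_inr, hc, dif_neg, Subtype.mk.injEq,
          not_false_eq_true] at h
        exact hc (h ▸ hW)
    · have hU' := hU.notMem
      have hW' := hW.notMem
      by_cases hc : Shatters (restrictAt V x false) U <;>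
      by_cases hc' : Shatters (restrictAt V x false) W <;>
      simp only [φ, Sum.elim_inr, hc, hc', dif_pos, dif_neg, Subtype.mk.injEq,
        not_false_eq_true] at h
      · have : U = W := by
          rw [← Finset.erase_insert hU', h, Finset.erase_insert hW']
        subst this; rfl
      · exact absurd (h ▸ Finset.mem_insert_self x U) hW'
      · exact absurd (h ▸ Finset.mem_insert_self x W) hU'
      · subst h; rfl
  calc _ = ∑' s, ENNReal.ofReal (weight d x (φ s)) := by
        rw [Summable.tsum_sum ENNReal.summable ENNReal.summable]
        unfold potential
        congr 1
        refine tsum_congr fun U => ?_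
        by_cases hc : Shatters (restrictAt V x false) U.1
        · simp [φ, hc, weight_insert]
        · simp [φ, hc]
    _ ≤ _ := ENNReal.tsum_comp_le_tsum_of_injective hφ
        fun U : {U : Finset ℕ // Shatters V U} => ENNReal.ofReal (weight d x U)

lemma potential_restrictAt_le (d x : ℕ) (V : Set (ℕ → Option Bool)) (b : Bool) :
    potential d x (restrictAt V x b) ≤ potential d x V := by
  have := potential_add_le d x V
  cases b
  · exact le_self_add.trans this
  · exact le_add_self.trans this

lemma two_mul_potential_le (d x : ℕ) (V : Set (ℕ → Option Bool)) :
    2 * potential d x (restrictAt V x (!prediction d x V)) ≤ potential d x V := by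
  refine le_trans ?_ (potential_add_le d x V)
  rw [two_mul]
  unfold prediction
  by_cases h : potential d x (restrictAt V x false) ≤ potential d x (restrictAt V x true)
  · simp only [h, decide_true, Bool.not_true]
    gcongr
  · simp only [h, decide_false, Bool.not_false]
    gcongr
    exact (not_le.1 h).le

lemma le_potential (d x : ℕ) {V : Set (ℕ → Option Bool)} (hV : V.Nonempty) :
    ENNReal.ofReal (((x : ℝ) + 1)⁻¹ ^ (d + 1)) ≤ potential d x V := by
  obtain ⟨h, hh⟩ := hV
  have h0 : Shatters V ∅ := fun f => ⟨h, hh, by simp⟩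
  have := ENNReal.le_tsum (f := fun U : {U : Finset ℕ // Shatters V U} =>
    ENNReal.ofReal (weight d x U)) ⟨∅, h0⟩
  simpa [potential, weight] using this

/-! ### The initial potential -/

lemma card_small_subsets_le (m L : ℕ) :
    #{U ∈ (range m).powerset | #U ≤ L} ≤ (m + 1) ^ L := by
  have h : ({U ∈ (range m).powerset | #U ≤ L} : Finset (Finset ℕ)) ⊆
      (range (L + 1)).biUnion fun i => (range m).powersetCard i := by
    intro U hU
    simp only [mem_filter, mem_powerset] at hU
    simp only [mem_biUnion, mem_range, mem_powersetCard]
    exact ⟨#U, by omega, hU.1, rfl⟩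
  calc _ ≤ _ := card_le_card h
    _ ≤ ∑ i ∈ range (L + 1), #((range m).powersetCard i) := card_biUnion_le
    _ ≤ ∑ i ∈ range (L + 1), m ^ i * 1 ^ (L - i) * L.choose i := by
        refine sum_le_sum fun i hi => ?_
        rw [card_powersetCard, card_range, one_pow, mul_one]
        exact (Nat.choose_le_pow m i).trans
          (Nat.le_mul_of_pos_right _ (Nat.choose_pos (by simpa [Nat.lt_succ_iff] using hi)))
    _ = _ := by rw [add_pow]; simp

/-- The part of the initial potential bound that concerns sets with maximum exactly `N`. -/
lemma sum_weight_insert_le (d N : ℕ) :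
    ∑ U ∈ (range N).powerset with #U + 1 ≤ d, weight d 0 (insert N U)
      ≤ (((N : ℝ) + 1) ^ 2)⁻¹ := by
  have hw : ∀ U ∈ ({U ∈ (range N).powerset | #U + 1 ≤ d} : Finset (Finset ℕ)),
      weight d 0 (insert N U) = ((N : ℝ) + 1)⁻¹ ^ (d + 1) := by
    intro U hU
    have hs : U.sup id ≤ N := Finset.sup_le fun y hy => by
      have := (mem_powerset.1 (mem_filter.1 hU).1) hy
      simp only [mem_range] at this
      exact this.le
    simp [weight, Finset.sup_insert, hs]
  rw [sum_congr rfl hw, sum_const, nsmul_eq_mul]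
  rcases d with _ | e
  · simp; positivity
  · have hc : (#{U ∈ (range N).powerset | #U + 1 ≤ e + 1} : ℝ) ≤ ((N : ℝ) + 1) ^ e := by
      have := card_small_subsets_le N e
      simp only [add_le_add_iff_right]
      exact_mod_cast this
    calc _ ≤ ((N : ℝ) + 1) ^ e * ((N : ℝ) + 1)⁻¹ ^ (e + 1 + 1) := by gcongr
      _ = _ := by
        have : (N : ℝ) + 1 ≠ 0 := by positivity
        rw [inv_pow]
        field_simp
        ring

lemma sum_weight_le (d N : ℕ) :
    ∑ U ∈ (range (N + 1)).powerset with #U ≤ d, weight d 0 U ≤ 3 - ((N : ℝ) + 1)⁻¹ := by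
  have step : ∀ M : ℕ, ∑ U ∈ (range (M + 1)).powerset with #U ≤ d, weight d 0 U ≤
      ∑ U ∈ (range M).powerset with #U ≤ d, weight d 0 U + (((M : ℝ) + 1) ^ 2)⁻¹ := by
    intro M
    refine le_trans (le_of_eq ?_) (add_le_add_right (sum_weight_insert_le d M) _)
    rw [sum_filter, sum_filter, sum_filter, Finset.range_add_one, sum_powerset_insert (by simp)]
    congr 1
    refine sum_congr rfl fun U hU => ?_
    rw [card_insert_of_notMem fun h => by simpa using mem_powerset.1 hU h]
  induction N with
  | zero =>
    refine (step 0).trans ?_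
    have : ∑ U ∈ (range 0).powerset with #U ≤ d, weight d 0 U ≤ 1 := by
      rw [sum_filter]; simp [weight]
    norm_num at this ⊢
    linarith
  | succ N ih =>
    refine (step (N + 1)).trans ((add_le_add_left ih _).trans ?_)
    have h1 : (0 : ℝ) < (N : ℝ) + 1 := by positivity
    push_cast
    have : (((N : ℝ) + 1 + 1) ^ 2)⁻¹ ≤ ((N : ℝ) + 1)⁻¹ - ((N : ℝ) + 1 + 1)⁻¹ := by
      rw [inv_sub_inv (by positivity) (by positivity), inv_eq_one_div]
      have : (N : ℝ) + 1 + 1 - (N + 1) = 1 := by ring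
      rw [this]
      gcongr
      nlinarith
    linarith

lemma potential_zero_le (d : ℕ) {H : Set (ℕ → Option Bool)}
    (hH : ∀ U : Finset ℕ, Shatters H U → U.card ≤ d) : potential d 0 H ≤ 3 := by
  unfold potential
  rw [ENNReal.tsum_eq_iSup_sum]
  refine iSup_le fun S => ?_
  rw [← ENNReal.ofReal_sum_of_nonneg
    (f := fun U : {U : Finset ℕ // Shatters H U} => weight d 0 U)
    fun U _ => weight_nonneg d 0 U]
  refine ENNReal.ofReal_le_of_le_toReal ?_
  let N := S.sup fun U => U.1.sup id
  calc ∑ U ∈ S, weight d 0 U.1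
      = ∑ U ∈ S.map (Function.Embedding.subtype _), weight d 0 U := by simp
    _ ≤ ∑ U ∈ (range (N + 1)).powerset with #U ≤ d, weight d 0 U := by
        refine sum_le_sum_of_subset_of_nonneg ?_ fun U _ _ => weight_nonneg d 0 U
        intro U hU
        obtain ⟨⟨U, hUs⟩, hUS, rfl⟩ := mem_map.1 hU
        refine mem_filter.2 ⟨mem_powerset.2 fun y hy => ?_, hH U hUs⟩
        have h1 : y ≤ U.sup id := Finset.le_sup (f := id) hy
        have h2 : U.sup id ≤ N :=
          Finset.le_sup (f := fun U : {U : Finset ℕ // Shatters H U} => U.1.sup id) hUS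
        exact mem_range.2 (by omega)
    _ ≤ 3 - ((N : ℝ) + 1)⁻¹ := sum_weight_le d N
    _ ≤ _ := by
        have : (0 : ℝ) ≤ ((N : ℝ) + 1)⁻¹ := by positivity
        norm_num
        linarith

/-! ### The mistake bound -/

/-- The truncated subtraction makes the left-hand potential `potential d 0 H` when `n = 0`; for
`n ≥ 1` it is the one that was used at the last coordinate read. -/
lemma two_pow_mul_potential_le (d : ℕ) (H : Set (ℕ → Option Bool))
    (err : ℕ → Set (ℕ → Option Bool) → Prop) (n : ℕ) :
    2 ^ #(mistakes d H err n) * potential d (n - 1) (versionSpace d H err n)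
      ≤ potential d 0 H := by
  induction n with
  | zero => simp [mistakes, versionSpace]
  | succ n ih =>
    refine le_trans ?_ ih
    have hanti := potential_anti d (Nat.sub_le n 1) (versionSpace d H err n)
    by_cases he : err n (versionSpace d H err n)
    · have hm : #(mistakes d H err (n + 1)) = #(mistakes d H err n) + 1 := by
        simp [mistakes, Finset.range_add_one, filter_insert, he]
      rw [hm, pow_succ, mul_assoc]
      simp only [versionSpace, he, if_true, Nat.add_sub_cancel]
      gcongr
      exact (two_mul_potential_le d n _).trans hanti
    · have hm : mistakes d H err (n + 1) = mistakes d H err n := by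
        simp [mistakes, Finset.range_add_one, filter_insert, he]
      rw [hm]
      simp only [versionSpace, he, if_false, Nat.add_sub_cancel]
      gcongr

lemma card_mistakes_le {d : ℕ} {H : Set (ℕ → Option Bool)}
    (hH : ∀ U : Finset ℕ, Shatters H U → U.card ≤ d)
    {err : ℕ → Set (ℕ → Option Bool) → Prop} {m : ℕ} (hm : 1 ≤ m)
    (hne : (versionSpace d H err m).Nonempty) :
    (#(mistakes d H err m) : ℝ) ≤ ((d : ℝ) + 1) * Real.logb 2 m + 2 := by
  have hm' : (0 : ℝ) < m := by exact_mod_cast hm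
  set M := #(mistakes d H err m)
  have h1 : 2 ^ M * ENNReal.ofReal ((m : ℝ)⁻¹ ^ (d + 1)) ≤ 3 := by
    refine le_trans ?_ ((two_pow_mul_potential_le d H err m).trans (potential_zero_le d hH))
    have := le_potential d (m - 1) hne
    rw [Nat.cast_sub hm, Nat.cast_one, sub_add_cancel] at this
    gcongr
  have h2 : (2 : ℝ) ^ M * (m : ℝ)⁻¹ ^ (d + 1) ≤ 3 := by
    have := ENNReal.toReal_mono (by simp) h1
    rwa [ENNReal.toReal_mul, ENNReal.toReal_ofReal (by positivity), ENNReal.toReal_pow,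
      ENNReal.toReal_ofNat, ENNReal.toReal_ofNat] at this
  have h3 : (2 : ℝ) ^ M ≤ (m : ℝ) ^ (d + 1) * 2 ^ 2 := by
    rw [inv_pow, ← div_eq_mul_inv, div_le_iff₀ (by positivity)] at h2
    have : (0 : ℝ) < (m : ℝ) ^ (d + 1) := by positivity
    linarith
  have h4 := Real.logb_le_logb_of_le (b := 2) (by norm_num) (by positivity) h3
  rw [Real.logb_mul (by positivity) (by positivity), Real.logb_pow, Real.logb_pow, Real.logb_pow,
    Real.logb_self_eq_one (by norm_num)] at h4
  push_cast at h4
  linarith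

/-! ### The disambiguation -/

lemma mem_versionSpace_errOf (d : ℕ) {H : Set (ℕ → Option Bool)} {h : ℕ → Option Bool}
    (hh : h ∈ H) (n : ℕ) : h ∈ versionSpace d H (errOf d h) n := by
  induction n with
  | zero => exact hh
  | succ n ih =>
    unfold versionSpace
    split_ifs with he
    · exact ⟨ih, he⟩
    · exact ih

lemma output_errOf (d : ℕ) (H : Set (ℕ → Option Bool)) {h : ℕ → Option Bool} {x : ℕ} {b : Bool}
    (hx : h x = some b) : output d H (errOf d h) x = b := by
  unfold output errOf
  rw [hx]
  generalize prediction d x _ = p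
  cases b <;> cases p <;> simp

/-- Declaring in advance the mistakes that a run makes below `m` reproduces that run below `m`. -/
lemma versionSpace_mistakes (d : ℕ) (H : Set (ℕ → Option Bool))
    (err : ℕ → Set (ℕ → Option Bool) → Prop) (m n : ℕ) (hn : n ≤ m) :
    versionSpace d H (fun x _ => x ∈ mistakes d H err m) n = versionSpace d H err n := by
  induction n with
  | zero => rfl
  | succ n ih =>
    have hnm : n < m := hn
    have hmem : n ∈ mistakes d H err m ↔ err n (versionSpace d H err n) := by
      simp [mistakes, hnm]
    simp only [versionSpace, ih hnm.le, hmem]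

lemma output_mistakes (d : ℕ) (H : Set (ℕ → Option Bool))
    (err : ℕ → Set (ℕ → Option Bool) → Prop) (m n : ℕ) (hn : n < m) :
    output d H (fun x _ => x ∈ mistakes d H err m) n = output d H err n := by
  have hmem : n ∈ mistakes d H err m ↔ err n (versionSpace d H err n) := by
    simp [mistakes, hn]
  simp only [output, versionSpace_mistakes d H err m n hn.le, hmem]

end

/-- a partial concept class on `ℕ` with `VC(H) = d < ∞` has a strong
disambiguation `H̄` whose projection onto the first `m` coordinates has size at most
`(m+1)^{(d+1)·log₂(m) + 2}` for every `m ≥ 1`. -/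
theorem strong_disambiguation_with_quasipolynomial_growth
    (H : Set (ℕ → Option Bool)) (d : ℕ) (hVC : VCDimEq H d) :
    ∃ Hbar : Set (ℕ → Bool),
      (∀ h ∈ H, ∃ g ∈ Hbar, ∀ (x : ℕ) (b : Bool), h x = some b → g x = b) ∧
      ∀ m : ℕ, 1 ≤ m →
        ((Set.ncard ((fun (g : ℕ → Bool) => fun i : Fin m => g i.1) '' Hbar) : ℝ)) ≤
          ((m : ℝ) + 1) ^ (((d : ℝ) + 1) * Real.logb 2 m + 2) := by
  classical
  refine ⟨(fun h => output d H (errOf d h)) '' H,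
    fun h hh => ⟨_, ⟨h, hh, rfl⟩, fun x b => output_errOf d H⟩, fun m hm => ?_⟩
  set B : ℝ := ((d : ℝ) + 1) * Real.logb 2 m + 2
  have hB : 0 ≤ B := by
    have : 0 ≤ Real.logb 2 m := Real.logb_nonneg (by norm_num) (by exact_mod_cast hm)
    positivity
  let L := ⌊B⌋₊
  let S : Finset (Finset ℕ) := {U ∈ (Finset.range m).powerset | U.card ≤ L}
  let F : Finset ℕ → Fin m → Bool := fun A i => output d H (fun x _ => x ∈ A) i
  have hsub : (fun (g : ℕ → Bool) => fun i : Fin m => g i.1) ''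
      ((fun h => output d H (errOf d h)) '' H) ⊆ ↑(S.image F) := by
    rintro _ ⟨_, ⟨h, hh, rfl⟩, rfl⟩
    rw [Finset.mem_coe, Finset.mem_image]
    refine ⟨mistakes d H (errOf d h) m,
      Finset.mem_filter.2 ⟨Finset.mem_powerset.2 (Finset.filter_subset _ _), ?_⟩,
      funext fun i => output_mistakes d H _ m i i.2⟩
    exact Nat.le_floor (card_mistakes_le hVC.2 hm ⟨h, mem_versionSpace_errOf d hh m⟩)
  have hcard : Set.ncard ((fun (g : ℕ → Bool) => fun i : Fin m => g i.1) ''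
      ((fun h => output d H (errOf d h)) '' H)) ≤ (m + 1) ^ L :=
    calc _ ≤ Set.ncard (S.image F : Set (Fin m → Bool)) :=
          Set.ncard_le_ncard hsub (Finset.finite_toSet _)
      _ = (S.image F).card := Set.ncard_coe_finset _
      _ ≤ S.card := Finset.card_image_le
      _ ≤ _ := card_small_subsets_le m L
  calc _ ≤ ((m : ℝ) + 1) ^ L := by exact_mod_cast hcard
    _ = ((m : ℝ) + 1) ^ (L : ℝ) := (Real.rpow_natCast _ _).symm
    _ ≤ _ := Real.rpow_le_rpow_of_exponent_le (by simp) (Nat.floor_le hB)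
end
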